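/- Let n ≥ 1, k ≥ 3 be integers and s > 0. Then for every integer l ≥ 1, Y_{n,k}(s) ≤ Y^l_{n,k}(s). (This is the inequality Y(W, G) ≤ Y^l(W, G) of the Proposition in Section 3.3 of the paper, in its Euclidean form W = M × ℝⁿ with constant scalar curvature s.) -/

import Mathlib

/-!
Since `V` has positive dimension, choose any nonzero `v ∈ V`. Hölder's inequality with the conjugate
exponents `k/2` and `p_k/2` gives `∫ u^{p_k-2} v² ≤ (∫ u^{p_k})^{2/k} (∫ |v|^{p_k})^{2/p_k}`
(`holder_weight`), so the value at `v` of the functional in the min-max problem is at least the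
Yamabe quotient of `v`, hence at least `Y_{n,k}(s)`.

Two facts make the real-valued `sSup` and `sInf` behave as a true supremum and infimum.
The supremum is over a set bounded above: numerator and denominator are quadratic forms on the
finite-dimensional space `V`, the second one positive definite, so their quotient is bounded
(`exists_forall_div_le`, by compactness of the unit sphere). The outer infimum is over a nonempty
set (`yamabeLSet_nonempty`): if `φ` is a bump function, then `P ↦ φ · P(φ)` embeds the polynomials
of degree `< l` into the test functions, as `φ` takes infinitely many values; the weight is the
indicator function of a ball containing the support of `φ`.
-/

open MeasureTheory

noncomputable section

/-- The constant `a_k = 4(k-1)/(k-2)`. -/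
def aK (k : ℕ) : ℝ := 4 * ((k : ℝ) - 1) / ((k : ℝ) - 2)

/-- The critical exponent `p_k = 2k/(k-2)`. -/
def pK (k : ℕ) : ℝ := 2 * (k : ℝ) / ((k : ℝ) - 2)

/-- Numerator of the Yamabe-type functional: `∫ (a_k |∇u|² + s u²) dx` on `ℝⁿ`. -/
def yNum (n k : ℕ) (s : ℝ) (u : EuclideanSpace ℝ (Fin n) → ℝ) : ℝ :=
  ∫ x, (aK k * ‖gradient u x‖ ^ 2 + s * (u x) ^ 2)

/-- Values of the Yamabe-type functional over nonzero test functions. -/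
def yamabeSet (n k : ℕ) (s : ℝ) : Set ℝ :=
  {r | ∃ u : EuclideanSpace ℝ (Fin n) → ℝ,
    ContDiff ℝ (⊤ : ℕ∞) u ∧ HasCompactSupport u ∧ u ≠ 0 ∧
    r = yNum n k s u / (∫ x, |u x| ^ pK k) ^ (2 / pK k)}

/-- The Euclidean Yamabe-type constant `Y_{n,k}(s)`. -/
def yamabeConst (n k : ℕ) (s : ℝ) : ℝ := sInf (yamabeSet n k s)

/-- Values of the min-max functional defining the `l`-th Euclidean Yamabe-type constant:
for admissible pairs `(u, V)` with `u ≥ 0` measurable, compactly supported, with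
`0 < ∫ u^{p_k} < ∞`, and `V` an `l`-dimensional space of smooth compactly supported
functions on which the weighted `L²` pairing is positive definite, take the sup over
`v ∈ V \ {0}` of the generalized Rayleigh quotient times `(∫ u^{p_k})^{2/k}`. -/
def yamabeLSet (n k : ℕ) (s : ℝ) (l : ℕ) : Set ℝ :=
  {r | ∃ (u : EuclideanSpace ℝ (Fin n) → ℝ)
        (V : Submodule ℝ (EuclideanSpace ℝ (Fin n) → ℝ)),
    Measurable u ∧ (∀ x, 0 ≤ u x) ∧ HasCompactSupport u ∧
    Integrable (fun x => u x ^ pK k) ∧ (0 < ∫ x, u x ^ pK k) ∧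
    Module.finrank ℝ V = l ∧
    (∀ v ∈ V, ContDiff ℝ (⊤ : ℕ∞) v ∧ HasCompactSupport v) ∧
    (∀ v ∈ V, v ≠ 0 → 0 < ∫ x, u x ^ (pK k - 2) * (v x) ^ 2) ∧
    r = sSup {t | ∃ v ∈ V, v ≠ 0 ∧
      t = (yNum n k s v / ∫ x, u x ^ (pK k - 2) * (v x) ^ 2) *
          (∫ x, u x ^ pK k) ^ (2 / (k : ℝ))}}

/-- The `l`-th Euclidean Yamabe-type constant `Y^l_{n,k}(s)`. -/
def yamabeLConst (n k : ℕ) (s : ℝ) (l : ℕ) : ℝ := sInf (yamabeLSet n k s l)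

/-! ### Quotients of quadratic forms in finite dimension -/

/-- In finite dimension, the quotient of a quadratic form by a positive definite one is bounded
above on nonzero vectors: it is continuous on a compact sphere and homogeneous of degree zero. -/
lemma exists_forall_div_le {E : Type*} [AddCommGroup E] [Module ℝ E] [FiniteDimensional ℝ E]
    (A B : E →ₗ[ℝ] E →ₗ[ℝ] ℝ) (hB : ∀ v, v ≠ 0 → 0 < B v v) :
    ∃ C : ℝ, ∀ v, v ≠ 0 → A v v / B v v ≤ C := by
  let W := Fin (Module.finrank ℝ E) → ℝ
  let f : W ≃ₗ[ℝ] E := (Module.finBasis ℝ E).equivFun.symm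
  have hcont : ∀ F : E →ₗ[ℝ] E →ₗ[ℝ] ℝ, Continuous fun c : W => F (f c) (f c) := by
    intro F
    let G : W →ₗ[ℝ] (W →L[ℝ] ℝ) :=
      (LinearMap.toContinuousLinearMap (𝕜 := ℝ) (E := W) (F' := ℝ)).toLinearMap ∘ₗ
        (F.compl₁₂ f.toLinearMap f.toLinearMap)
    have hG : Continuous G := LinearMap.continuous_of_finiteDimensional G
    have h := hG.clm_apply (continuous_id (X := W))
    exact h
  have hne : ∀ c : W, c ≠ 0 → f c ≠ 0 := fun c hc h => hc (by simpa using h)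
  have hbdd : BddAbove ((fun c : W => A (f c) (f c) / B (f c) (f c)) '' Metric.sphere 0 1) := by
    refine ((isCompact_sphere (0 : W) 1).image_of_continuousOn ?_).bddAbove
    refine (hcont A).continuousOn.div (hcont B).continuousOn ?_
    intro c hc
    have : c ≠ 0 := by
      rintro rfl
      simp at hc
    exact (hB _ (hne c this)).ne'
  obtain ⟨C, hC⟩ := hbdd
  refine ⟨C, fun v hv => ?_⟩
  obtain ⟨c, rfl⟩ := f.surjective v
  have hc : c ≠ 0 := by
    rintro rfl
    simp at hv
  have hn : ‖c‖ ≠ 0 := norm_ne_zero_iff.2 hc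
  have := hC ⟨‖c‖⁻¹ • c, by simp [norm_smul, hn], rfl⟩
  simp only [map_smul, LinearMap.smul_apply, smul_eq_mul] at this
  rwa [mul_div_mul_left _ _ (inv_ne_zero hn), mul_div_mul_left _ _ (inv_ne_zero hn)] at this

/-! ### The exponents -/

lemma pK_pos {k : ℕ} (hk : 3 ≤ k) : 0 < pK k := by
  have : (3 : ℝ) ≤ k := by exact_mod_cast hk
  unfold pK
  apply div_pos <;> linarith

lemma pK_sub_two {k : ℕ} (hk : 3 ≤ k) : pK k - 2 = 4 / ((k : ℝ) - 2) := by
  have : (3 : ℝ) ≤ k := by exact_mod_cast hk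
  have h2 : (k : ℝ) - 2 ≠ 0 := by linarith
  unfold pK
  field_simp
  ring

lemma pK_sub_two_pos {k : ℕ} (hk : 3 ≤ k) : 0 < pK k - 2 := by
  have : (3 : ℝ) ≤ k := by exact_mod_cast hk
  rw [pK_sub_two hk]
  apply div_pos <;> linarith

lemma pK_sub_two_mul {k : ℕ} (hk : 3 ≤ k) : (pK k - 2) * ((k : ℝ) / 2) = pK k := by
  have : (3 : ℝ) ≤ k := by exact_mod_cast hk
  have h2 : (k : ℝ) - 2 ≠ 0 := by linarith
  rw [pK_sub_two hk]
  unfold pK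
  field_simp
  ring

lemma aK_nonneg {k : ℕ} (hk : 3 ≤ k) : 0 ≤ aK k := by
  have : (3 : ℝ) ≤ k := by exact_mod_cast hk
  unfold aK
  apply div_nonneg <;> linarith

lemma holderConjugate_pK {k : ℕ} (hk : 3 ≤ k) :
    ((k : ℝ) / 2).HolderConjugate (pK k / 2) := by
  have : (3 : ℝ) ≤ k := by exact_mod_cast hk
  have h2 : (k : ℝ) - 2 ≠ 0 := by linarith
  rw [Real.holderConjugate_iff]
  refine ⟨by linarith, ?_⟩
  unfold pK
  field_simp
  ring

lemma yNum_nonneg {n k : ℕ} (hk : 3 ≤ k) {s : ℝ} (hs : 0 < s)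
    (u : EuclideanSpace ℝ (Fin n) → ℝ) : 0 ≤ yNum n k s u := by
  refine integral_nonneg fun x => ?_
  have := aK_nonneg hk
  simp only [Pi.zero_apply]
  positivity

/-! ### Hölder's inequality for the weighted pairing -/

lemma integrable_abs_rpow_pK {n k : ℕ} (hk : 3 ≤ k) {v : EuclideanSpace ℝ (Fin n) → ℝ}
    (hv : Continuous v) (hvc : HasCompactSupport v) : Integrable fun x => |v x| ^ pK k := by
  refine Continuous.integrable_of_hasCompactSupport
    (hv.abs.rpow_const fun x => Or.inr (pK_pos hk).le) ?_
  refine hvc.comp_left (g := fun t : ℝ => |t| ^ pK k) ?_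
  simp [Real.zero_rpow (pK_pos hk).ne']

lemma holder_weight {n k : ℕ} (hk : 3 ≤ k) {u v : EuclideanSpace ℝ (Fin n) → ℝ}
    (hum : Measurable u) (hu0 : ∀ x, 0 ≤ u x) (hui : Integrable fun x => u x ^ pK k)
    (hv : Continuous v) (hvc : HasCompactSupport v) :
    ∫ x, u x ^ (pK k - 2) * (v x) ^ 2 ≤
      (∫ x, u x ^ pK k) ^ (2 / (k : ℝ)) * (∫ x, |v x| ^ pK k) ^ (2 / pK k) := by
  have hk' : (3 : ℝ) ≤ k := by exact_mod_cast hk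
  have hp := pK_pos hk
  have e1 : ∀ x, (u x ^ (pK k - 2)) ^ ((k : ℝ) / 2) = u x ^ pK k := fun x => by
    rw [← Real.rpow_mul (hu0 x), pK_sub_two_mul hk]
  have e2 : ∀ x, ((v x) ^ 2) ^ (pK k / 2) = |v x| ^ pK k := fun x => by
    rw [← sq_abs, ← Real.rpow_natCast, ← Real.rpow_mul (abs_nonneg _)]
    congr 1
    push_cast
    ring
  have h := integral_mul_le_Lp_mul_Lq_of_nonneg (μ := volume) (holderConjugate_pK hk)
    (f := fun x => u x ^ (pK k - 2)) (g := fun x => (v x) ^ 2)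
    (Filter.Eventually.of_forall fun x => Real.rpow_nonneg (hu0 x) _)
    (Filter.Eventually.of_forall fun x => sq_nonneg _) ?_ ?_
  · simpa only [e1, e2, one_div_div] using h
  · rw [← integrable_norm_rpow_iff (hum.pow_const _).aestronglyMeasurable
      (by simp; linarith) (by simp), ENNReal.toReal_ofReal (by linarith)]
    refine hui.congr (Filter.Eventually.of_forall fun x => ?_)
    simp only
    rw [Real.norm_of_nonneg (Real.rpow_nonneg (hu0 x) _), e1]
  · rw [← integrable_norm_rpow_iff (f := fun x => (v x) ^ 2) (hv.pow 2).aestronglyMeasurable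
      (by simp; linarith) (by simp), ENNReal.toReal_ofReal (by linarith)]
    refine (integrable_abs_rpow_pK hk hv hvc).congr (Filter.Eventually.of_forall fun x => ?_)
    simp only
    rw [Real.norm_of_nonneg (sq_nonneg _), e2]

/-! ### Boundedness of the Rayleigh quotient -/

lemma gradient_add' {n : ℕ} {v w : EuclideanSpace ℝ (Fin n) → ℝ} (hv : Differentiable ℝ v)
    (hw : Differentiable ℝ w) (x : EuclideanSpace ℝ (Fin n)) :
    gradient (v + w) x = gradient v x + gradient w x := by
  simp only [gradient]
  rw [fderiv_add (hv x) (hw x), map_add]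

lemma gradient_smul' {n : ℕ} {v : EuclideanSpace ℝ (Fin n) → ℝ} (hv : Differentiable ℝ v)
    (c : ℝ) (x : EuclideanSpace ℝ (Fin n)) :
    gradient (c • v) x = c • gradient v x := by
  simp only [gradient]
  rw [fderiv_const_smul (hv x), map_smulₛₗ]
  simp

lemma continuous_gradient' {n : ℕ} {v : EuclideanSpace ℝ (Fin n) → ℝ}
    (hv : ContDiff ℝ (⊤ : ℕ∞) v) : Continuous (gradient v) :=
  (LinearIsometryEquiv.continuous _).comp (hv.continuous_fderiv (by simp))

lemma integrable_energy {n k : ℕ} {s : ℝ} {v w : EuclideanSpace ℝ (Fin n) → ℝ}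
    (hv : ContDiff ℝ (⊤ : ℕ∞) v) (hvc : HasCompactSupport v) (hw : ContDiff ℝ (⊤ : ℕ∞) w) :
    Integrable fun x => aK k * inner ℝ (gradient v x) (gradient w x) + s * (v x * w x) := by
  have hgv : HasCompactSupport (gradient v) :=
    (hvc.fderiv (𝕜 := ℝ)).comp_left (map_zero _)
  refine Continuous.integrable_of_hasCompactSupport ?_ ?_
  · exact (continuous_const.mul
      ((continuous_gradient' hv).inner (continuous_gradient' hw))).add
      (continuous_const.mul (hv.continuous.mul hw.continuous))
  · refine HasCompactSupport.add ?_ ?_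
    · refine hgv.mono fun x hx hx0 => hx ?_
      simp [hx0]
    · refine hvc.mono fun x hx hx0 => hx ?_
      simp [hx0]

/-- The weight `u^{p_k-2}` is dominated by `1 + u^{p_k}`, hence integrable against continuous
compactly supported functions. -/
lemma integrable_weight {n k : ℕ} (hk : 3 ≤ k) {u v w : EuclideanSpace ℝ (Fin n) → ℝ}
    (hum : Measurable u) (hu0 : ∀ x, 0 ≤ u x) (hui : Integrable fun x => u x ^ pK k)
    (hv : Continuous v) (hvc : HasCompactSupport v) (hw : Continuous w) :
    Integrable fun x => u x ^ (pK k - 2) * (v x * w x) := by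
  have hc : Continuous fun x => v x * w x := hv.mul hw
  have hcs : HasCompactSupport fun x => v x * w x := hvc.mul_right
  obtain ⟨C, hC⟩ := hcs.exists_bound_of_continuous hc
  have h1 : Integrable fun x => v x * w x := hc.integrable_of_hasCompactSupport hcs
  have h2 : Integrable fun x => u x ^ pK k * (v x * w x) :=
    hui.mul_bdd hc.aestronglyMeasurable (Filter.Eventually.of_forall hC)
  refine (h1.norm.add h2.norm).mono
    ((hum.pow_const _).aestronglyMeasurable.mul hc.aestronglyMeasurable)
    (Filter.Eventually.of_forall fun x => ?_)
  have hp := pK_sub_two_pos hk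
  have hle : u x ^ (pK k - 2) ≤ 1 + u x ^ pK k := by
    have hnn := Real.rpow_nonneg (hu0 x) (pK k)
    rcases le_total (u x) 1 with h | h
    · linarith [Real.rpow_le_one (hu0 x) h hp.le]
    · linarith [Real.rpow_le_rpow_of_exponent_le h (show pK k - 2 ≤ pK k by linarith)]
  have hnn := Real.rpow_nonneg (hu0 x) (pK k)
  have hnn' := Real.rpow_nonneg (hu0 x) (pK k - 2)
  simp only [Pi.add_apply, norm_mul, Real.norm_eq_abs, abs_of_nonneg hnn, abs_of_nonneg hnn']
  refine le_trans ?_ (le_abs_self _)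
  nlinarith [mul_le_mul_of_nonneg_right hle (show 0 ≤ |v x| * |w x| by positivity)]

lemma exists_rayleigh_bound {n k : ℕ} (hk : 3 ≤ k) (s : ℝ)
    {u : EuclideanSpace ℝ (Fin n) → ℝ} {V : Submodule ℝ (EuclideanSpace ℝ (Fin n) → ℝ)}
    [FiniteDimensional ℝ V]
    (hum : Measurable u) (hu0 : ∀ x, 0 ≤ u x) (hui : Integrable fun x => u x ^ pK k)
    (hV : ∀ v ∈ V, ContDiff ℝ (⊤ : ℕ∞) v ∧ HasCompactSupport v)
    (hpos : ∀ v ∈ V, v ≠ 0 → 0 < ∫ x, u x ^ (pK k - 2) * (v x) ^ 2) :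
    ∃ C : ℝ, ∀ v ∈ V, v ≠ 0 → yNum n k s v / ∫ x, u x ^ (pK k - 2) * (v x) ^ 2 ≤ C := by
  have hd : ∀ v : V, Differentiable ℝ (v : EuclideanSpace ℝ (Fin n) → ℝ) :=
    fun v => (hV v v.2).1.differentiable (by simp)
  have iA : ∀ v w : V, Integrable fun x =>
      aK k * inner ℝ (gradient v.1 x) (gradient w.1 x) + s * (v.1 x * w.1 x) :=
    fun v w => integrable_energy (hV v v.2).1 (hV v v.2).2 (hV w w.2).1
  have iB : ∀ v w : V, Integrable fun x => u x ^ (pK k - 2) * (v.1 x * w.1 x) :=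
    fun v w => integrable_weight hk hum hu0 hui (hV v v.2).1.continuous (hV v v.2).2
      (hV w w.2).1.continuous
  let A : V →ₗ[ℝ] V →ₗ[ℝ] ℝ := LinearMap.mk₂ ℝ
    (fun v w => ∫ x, (aK k * inner ℝ (gradient v.1 x) (gradient w.1 x) + s * (v.1 x * w.1 x)))
    (fun v v' w => by
      rw [← integral_add (iA v w) (iA v' w)]
      congr 1 with x
      rw [Submodule.coe_add, gradient_add' (hd v) (hd v'), inner_add_left, Pi.add_apply]
      ring)
    (fun c v w => by
      rw [smul_eq_mul, ← integral_const_mul]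
      congr 1 with x
      rw [Submodule.coe_smul, gradient_smul' (hd v), real_inner_smul_left, Pi.smul_apply,
        smul_eq_mul]
      ring)
    (fun v w w' => by
      rw [← integral_add (iA v w) (iA v w')]
      congr 1 with x
      rw [Submodule.coe_add, gradient_add' (hd w) (hd w'), inner_add_right, Pi.add_apply]
      ring)
    (fun c v w => by
      rw [smul_eq_mul, ← integral_const_mul]
      congr 1 with x
      rw [Submodule.coe_smul, gradient_smul' (hd w), real_inner_smul_right, Pi.smul_apply,
        smul_eq_mul]
      ring)
  let B : V →ₗ[ℝ] V →ₗ[ℝ] ℝ := LinearMap.mk₂ ℝ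
    (fun v w => ∫ x, u x ^ (pK k - 2) * (v.1 x * w.1 x))
    (fun v v' w => by
      rw [← integral_add (iB v w) (iB v' w)]
      congr 1 with x
      rw [Submodule.coe_add, Pi.add_apply]
      ring)
    (fun c v w => by
      rw [smul_eq_mul, ← integral_const_mul]
      congr 1 with x
      rw [Submodule.coe_smul, Pi.smul_apply, smul_eq_mul]
      ring)
    (fun v w w' => by
      rw [← integral_add (iB v w) (iB v w')]
      congr 1 with x
      rw [Submodule.coe_add, Pi.add_apply]
      ring)
    (fun c v w => by
      rw [smul_eq_mul, ← integral_const_mul]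
      congr 1 with x
      rw [Submodule.coe_smul, Pi.smul_apply, smul_eq_mul]
      ring)
  have hA : ∀ v : V, A v v = yNum n k s v.1 := fun v => by
    simp only [A, LinearMap.mk₂_apply, yNum, real_inner_self_eq_norm_sq, ← pow_two]
  have hB : ∀ v : V, B v v = ∫ x, u x ^ (pK k - 2) * (v.1 x) ^ 2 := fun v => by
    simp only [B, LinearMap.mk₂_apply, ← pow_two]
  obtain ⟨C, hC⟩ := exists_forall_div_le A B fun v hv => by
    rw [hB]
    exact hpos v v.2 fun h => hv (Subtype.ext h)
  refine ⟨C, fun v hv hv0 => ?_⟩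
  have := hC ⟨v, hv⟩ fun h => hv0 (congrArg Subtype.val h)
  rwa [hA, hB] at this

/-! ### Admissible pairs exist -/

lemma yamabeLSet_nonempty {n k : ℕ} (hn : 1 ≤ n) (hk : 3 ≤ k) (s : ℝ) (l : ℕ) :
    (yamabeLSet n k s l).Nonempty := by
  classical
  have : Nonempty (Fin n) := ⟨⟨0, hn⟩⟩
  let φ : ContDiffBump (0 : EuclideanSpace ℝ (Fin n)) := default
  have hφ : ContDiff ℝ (⊤ : ℕ∞) φ := φ.contDiff
  let L : Polynomial ℝ →ₗ[ℝ] (EuclideanSpace ℝ (Fin n) → ℝ) :=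
    { toFun := fun P x => φ x * P.eval (φ x)
      map_add' := fun P Q => by
        ext x
        simp [mul_add]
      map_smul' := fun c P => by
        ext x
        simp
        ring }
  -- By connectedness `φ` takes every value in `(0, 1]`, and all of these are roots of `P`
  -- when `L P = 0`.
  have hLinj : Function.Injective L := by
    rw [← LinearMap.ker_eq_bot, LinearMap.ker_eq_bot']
    intro P hP
    obtain ⟨y, hy⟩ : ∃ y : EuclideanSpace ℝ (Fin n), φ.rOut ≤ ‖y‖ := by
      obtain ⟨y, hy⟩ := exists_norm_eq (EuclideanSpace ℝ (Fin n)) φ.rOut_pos.le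
      exact ⟨y, hy.ge⟩
    have hy0 : φ y = 0 := φ.zero_of_le_dist (by simpa using hy)
    have hx1 : φ 0 = 1 := φ.one_of_mem_closedBall (by simp [φ.rIn_pos.le])
    have hrange : Set.Icc (0 : ℝ) 1 ⊆ Set.range φ := by
      have := intermediate_value_univ y 0 hφ.continuous
      rwa [hy0, hx1] at this
    refine P.eq_zero_of_infinite_isRoot ((Set.Ioc_infinite (zero_lt_one' ℝ)).mono ?_)
    intro t ht
    obtain ⟨x, hx⟩ := hrange ⟨ht.1.le, ht.2⟩
    have h := congrFun hP x
    simp only [L, LinearMap.coe_mk, AddHom.coe_mk, hx, Pi.zero_apply, mul_eq_zero] at h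
    exact h.resolve_left ht.1.ne'
  let K : Set (EuclideanSpace ℝ (Fin n)) := Metric.closedBall 0 φ.rOut
  have hK : MeasurableSet K := Metric.isClosed_closedBall.measurableSet
  let u : EuclideanSpace ℝ (Fin n) → ℝ := K.indicator fun _ => 1
  have hpow : ∀ {q : ℝ}, 0 < q → (fun x => u x ^ q) = u := by
    intro q hq
    ext x
    by_cases hx : x ∈ K <;> simp [u, hx, Real.zero_rpow hq.ne']
  have hVs : ∀ v ∈ (Polynomial.degreeLT ℝ l).map L,
      (ContDiff ℝ (⊤ : ℕ∞) v ∧ HasCompactSupport v) ∧ ∀ x ∉ K, v x = 0 := by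
    rintro _ ⟨P, -, rfl⟩
    refine ⟨⟨?_, ?_⟩, ?_⟩
    · have hP : ContDiff ℝ (⊤ : ℕ∞) fun t : ℝ => P.eval t := by
        simpa using P.contDiff_aeval (𝕜 := ℝ) _
      exact hφ.mul (hP.comp hφ)
    · exact φ.hasCompactSupport.mul_right
    · intro x hx
      have : φ x = 0 := φ.zero_of_le_dist (by
        simp only [K, Metric.mem_closedBall, not_le] at hx
        exact hx.le)
      simp [L, this]
  refine ⟨_, u, (Polynomial.degreeLT ℝ l).map L, ?_, ?_, ?_, ?_, ?_, ?_, fun v hv => (hVs v hv).1,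
    ?_, rfl⟩
  · exact measurable_const.indicator hK
  · exact fun x => Set.indicator_nonneg (fun _ _ => zero_le_one) x
  · exact HasCompactSupport.intro (isCompact_closedBall _ _) fun x hx =>
      Set.indicator_of_notMem hx _
  · rw [hpow (pK_pos hk)]
    exact (integrable_indicator_iff hK).2
      (integrableOn_const (isCompact_closedBall _ _).measure_lt_top.ne)
  · rw [hpow (pK_pos hk), integral_indicator hK]
    simp only [integral_const, smul_eq_mul, mul_one, measureReal_restrict_apply_univ]
    exact ENNReal.toReal_pos (Metric.measure_closedBall_pos _ _ φ.rOut_pos).ne'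
      (isCompact_closedBall _ _).measure_lt_top.ne
  · rw [← LinearEquiv.finrank_eq (Submodule.equivMapOfInjective L hLinj _),
      LinearEquiv.finrank_eq (Polynomial.degreeLTEquiv ℝ l)]
    simp
  · intro v hv hv0
    have hw : (fun x => u x ^ (pK k - 2) * (v x) ^ 2) = fun x => (v x) ^ 2 := by
      ext x
      rw [show u x ^ (pK k - 2) = u x from congrFun (hpow (pK_sub_two_pos hk)) x]
      by_cases hx : x ∈ K
      · simp [u, hx]
      · simp [(hVs v hv).2 x hx]
    rw [hw]
    obtain ⟨x, hx⟩ := Function.ne_iff.1 hv0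
    refine Continuous.integral_pos_of_hasCompactSupport_nonneg_nonzero (x := x)
      ((hVs v hv).1.1.continuous.pow 2) ?_ (fun x => sq_nonneg _) (pow_ne_zero 2 hx)
    exact (hVs v hv).1.2.comp_left (g := fun t : ℝ => t ^ 2) (by simp)

/-! ### The comparison -/

/-- For `n ≥ 1`, `k ≥ 3`, `s > 0` and every `l ≥ 1`,
`Y_{n,k}(s) ≤ Y^l_{n,k}(s)`. -/
theorem yamabe_le_yamabeL (n k : ℕ) (hn : 1 ≤ n) (hk : 3 ≤ k) (s : ℝ) (hs : 0 < s)
    (l : ℕ) (hl : 1 ≤ l) :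
    yamabeConst n k s ≤ yamabeLConst n k s l := by
  refine le_csInf (yamabeLSet_nonempty hn hk s l) ?_
  rintro _ ⟨u, V, hum, hu0, -, hui, hU, hfr, hV, hpos, rfl⟩
  have : FiniteDimensional ℝ V := Module.finite_of_finrank_pos (by omega)
  have : Nontrivial V := Module.nontrivial_of_finrank_pos (R := ℝ) (by omega)
  obtain ⟨⟨v, hv⟩, hv0⟩ := exists_ne (0 : V)
  replace hv0 : v ≠ 0 := fun h => hv0 (Subtype.ext h)
  obtain ⟨C, hC⟩ := exists_rayleigh_bound hk s hum hu0 hui hV hpos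
  have hUr : 0 < (∫ x, u x ^ pK k) ^ (2 / (k : ℝ)) := Real.rpow_pos_of_pos hU _
  refine le_trans ?_ (le_csSup ⟨C * (∫ x, u x ^ pK k) ^ (2 / (k : ℝ)), ?_⟩ ⟨v, hv, hv0, rfl⟩)
  · refine le_trans (csInf_le ⟨0, ?_⟩ ⟨v, (hV v hv).1, (hV v hv).2, hv0, rfl⟩) ?_
    · rintro _ ⟨w, -, -, -, rfl⟩
      exact div_nonneg (yNum_nonneg hk hs w) (Real.rpow_nonneg
        (integral_nonneg fun x => Real.rpow_nonneg (abs_nonneg _) _) _)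
    · have hH := holder_weight hk hum hu0 hui (hV v hv).1.continuous (hV v hv).2
      have hD := hpos v hv hv0
      have hN : 0 < (∫ x, |v x| ^ pK k) ^ (2 / pK k) :=
        pos_of_mul_pos_right (hD.trans_le hH) hUr.le
      rw [div_mul_eq_mul_div, div_le_div_iff₀ hN hD, mul_assoc]
      exact mul_le_mul_of_nonneg_left hH (yNum_nonneg hk hs v)
  · rintro _ ⟨w, hw, hw0, rfl⟩
    exact mul_le_mul_of_nonneg_right (hC w hw hw0) hUr.le
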